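/- (Lemma 5.5) Let u : Θ → ℝ be bounded and d_p-uniformly continuous. Then lim_{n→∞} u^n(0, 0) = u(0, 0), where (0,0) denotes the point of Θ with t = 0 and ω the constant zero path. -/

import Mathlib

open MeasureTheory Set Filter Topology

noncomputable section

/-- `ℝ^d` with the Euclidean norm. -/
abbrev E (d : ℕ) := EuclideanSpace ℝ (Fin d)

/-- A point `θ = (t, ω)` of `Θ = [0,T] × Ω`, where `Ω` is the set of continuous
paths `[0,T] → ℝ^d` starting from the origin. -/
structure Theta (T : ℝ) (d : ℕ) where
  t : ℝ
  path : ℝ → E d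
  ht : t ∈ Set.Icc 0 T
  cont : ContinuousOn path (Set.Icc 0 T)
  init : path 0 = 0

/-- `‖f‖_q^q := ‖f T‖^q + ∫_0^T ‖f s‖^q ds`. -/
def pnormPow (T q : ℝ) {d : ℕ} (f : ℝ → E d) : ℝ :=
  ‖f T‖ ^ q + ∫ s in (0:ℝ)..T, ‖f s‖ ^ q

/-- `‖f‖_q := (‖f T‖^q + ∫_0^T ‖f s‖^q ds)^(1/q)`. -/
def pnorm (T q : ℝ) {d : ℕ} (f : ℝ → E d) : ℝ := (pnormPow T q f) ^ (1 / q)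

/-- The pseudo-distance `d_p(θ,θ') = |t - t'| + ‖ω_{t∧·} - ω'_{t'∧·}‖_p`. -/
def dpDist (T p : ℝ) {d : ℕ} (θ θ' : Theta T d) : ℝ :=
  |θ.t - θ'.t| + pnorm T p (fun s => θ.path (min θ.t s) - θ'.path (min θ'.t s))

/-- The set `𝓛_{t,s}` of monotone time changes: for `s > 0`, nondecreasing
`ℓ : [0,T] → ℝ` restricting to an increasing bijection from `[0,t]` onto `[0,s]`
with `ℓ(r) = r - t + s` on `(t,T]`; for `s = 0` the single function `ℓ^{t,0}`. -/
def LL (T t s : ℝ) : Set (ℝ → ℝ) :=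
  if s = 0 then {fun r => if r ≤ t then 0 else r - t}
  else {ℓ | MonotoneOn ℓ (Set.Icc 0 T) ∧ StrictMonoOn ℓ (Set.Icc 0 t) ∧
        Set.BijOn ℓ (Set.Icc 0 t) (Set.Icc 0 s) ∧ ∀ r ∈ Set.Ioc t T, ℓ r = r - t + s}

/-- `‖ℓ - I‖_∞ := sup_{0 ≤ r ≤ T} |ℓ(r) - r|`. -/
def supId (T : ℝ) (ℓ : ℝ → ℝ) : ℝ := ⨆ r : Set.Icc (0:ℝ) T, |ℓ r - (r : ℝ)|

/-- The penalization `Φ(s,η,θ,ℓ) := ‖ℓ - I‖_∞^{2/(3p+3)} + ‖η_{s∧ℓ(·)} - ω_{t∧·}‖_{p+1}^{p+1}`. -/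
def Phi (T p : ℝ) {d : ℕ} (s : ℝ) (η : ℝ → E d) (θ : Theta T d) (ℓ : ℝ → ℝ) : ℝ :=
  (supId T ℓ) ^ (2 / (3 * p + 3)) +
    pnormPow T (p + 1) (fun r => η (min s (ℓ r)) - θ.path (min θ.t r))

/-- The regularization
`u^n(s,η) := sup { u(θ) - n Φ(s,η,θ,ℓ) : θ ∈ Θ \ {𝟎}, ℓ ∈ 𝓛_{t,s} }`. -/
def reg (T p : ℝ) {d : ℕ} (u : Theta T d → ℝ) (n : ℕ) (s : ℝ) (η : ℝ → E d) : ℝ :=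
  sSup { x | ∃ θ : Theta T d, ∃ ℓ : ℝ → ℝ, (θ.t, θ.path) ≠ (0, 0) ∧ ℓ ∈ LL T θ.t s ∧
        x = u θ - (n : ℝ) * Phi T p s η θ ℓ }

/-- A càdlàg path on `[0,T]`: right-continuous with left limits. -/
def Cadlag (T : ℝ) {d : ℕ} (η : ℝ → E d) : Prop :=
  (∀ x ∈ Set.Ico (0:ℝ) T, ContinuousWithinAt η (Set.Ici x) x) ∧
  (∀ x ∈ Set.Ioc (0:ℝ) T, ∃ l : E d, Filter.Tendsto η (nhdsWithin x (Set.Iio x)) (𝓝 l))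

/-- The piecewise constant path `η^{λ_i}(x)_s = Σ_j x_j 1_{{s ≥ s_j}}`. -/
def pcPath {d i : ℕ} (sVec : Fin i → ℝ) (xVec : Fin i → E d) : ℝ → E d :=
  fun r => ∑ j : Fin i, if sVec j ≤ r then xVec j else 0

/-!
At `(0, 0)` the only admissible time change is `ℓ^{t,0}`, so the penalization of `θ = (t, ω)` is
`t ^ (2 / (3p + 3)) + ‖ω_{t∧·}‖_{p+1}^{p+1}`. As `‖·‖_q` is the `L^q` norm of the finite measure
`δ_T + ds`, Hölder's inequality bounds `d_p(θ, 0)` by a function of this penalization that vanishes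
at `0`. Hence `u θ` is close to `u 0` where the penalization is small, and points where it is not
small are ruled out for large `n` because `u` is bounded above. Conversely the points `(t, 0)` with
`t ↓ 0` are admissible and have penalization tending to `0`.
-/

section SupPenalization

variable {X : Type*} {S : Set X} {u Φ : X → ℝ} {a : ℝ}

lemma bddAbove_image_sub_mul (hu : BddAbove (u '' S)) (hΦ : ∀ x ∈ S, 0 ≤ Φ x) {c : ℝ}
    (hc : 0 ≤ c) : BddAbove ((fun x => u x - c * Φ x) '' S) := by
  obtain ⟨M, hM⟩ := hu
  refine ⟨M, forall_mem_image.2 fun x hx => ?_⟩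
  exact (sub_le_self _ (mul_nonneg hc (hΦ x hx))).trans (hM (mem_image_of_mem u hx))

lemma le_sSup_image_sub_mul (hu : BddAbove (u '' S)) (hΦ : ∀ x ∈ S, 0 ≤ Φ x)
    (hΦ₀ : 0 ∈ closure (Φ '' S)) (hua : Tendsto u (comap Φ (𝓝 0)) (𝓝 a)) {c : ℝ} (hc : 0 ≤ c) :
    a ≤ sSup ((fun x => u x - c * Φ x) '' S) := by
  have : (comap Φ (𝓝 0) ⊓ 𝓟 S).NeBot := by
    rwa [← map_neBot_iff Φ, Filter.push_pull', map_principal, ← ClusterPt,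
      ← mem_closure_iff_clusterPt]
  have hlim : Tendsto (fun x => u x - c * Φ x) (comap Φ (𝓝 0)) (𝓝 a) := by
    simpa using hua.sub (tendsto_comap.const_mul c)
  refine le_of_tendsto (hlim.mono_left (inf_le_left (b := 𝓟 S))) ?_
  filter_upwards [mem_inf_of_right (mem_principal_self S)] with x hx
  exact le_csSup (bddAbove_image_sub_mul hu hΦ hc) (mem_image_of_mem _ hx)

lemma eventually_sSup_image_sub_mul_le (hS : S.Nonempty) (hu : BddAbove (u '' S))
    (hΦ : ∀ x ∈ S, 0 ≤ Φ x) (hua : Tendsto u (comap Φ (𝓝 0)) (𝓝 a)) {b : ℝ} (hb : a < b) :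
    ∀ᶠ c : ℝ in atTop, sSup ((fun x => u x - c * Φ x) '' S) ≤ b := by
  obtain ⟨M, hM⟩ := hu
  obtain ⟨κ, hκ, hsmall⟩ : ∃ κ > 0, ∀ x, |Φ x| < κ → u x < b := by
    obtain ⟨κ, hκ, h⟩ := Metric.eventually_nhds_iff.1
      (eventually_comap.1 (hua.eventually (gt_mem_nhds hb)))
    exact ⟨κ, hκ, fun x hx => h (by simpa using hx) x rfl⟩
  filter_upwards [eventually_ge_atTop 0, eventually_ge_atTop ((M - b) / κ)] with c hc hcM
  refine csSup_le (hS.image _) (forall_mem_image.2 fun x hx => ?_)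
  rcases lt_or_ge (Φ x) κ with hlt | hge
  · have hux : u x < b := hsmall x (by rwa [abs_of_nonneg (hΦ x hx)])
    exact (sub_le_self _ (mul_nonneg hc (hΦ x hx))).trans hux.le
  · have hMc : M - b ≤ c * Φ x :=
      ((div_le_iff₀ hκ).1 hcM).trans (mul_le_mul_of_nonneg_left hge hc)
    linarith [hM (mem_image_of_mem u hx)]

theorem tendsto_sSup_image_sub_mul (hu : BddAbove (u '' S)) (hΦ : ∀ x ∈ S, 0 ≤ Φ x)
    (hΦ₀ : 0 ∈ closure (Φ '' S)) (hua : Tendsto u (comap Φ (𝓝 0)) (𝓝 a)) :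
    Tendsto (fun c : ℝ => sSup ((fun x => u x - c * Φ x) '' S)) atTop (𝓝 a) := by
  have hS : S.Nonempty := image_nonempty.1 (closure_nonempty_iff.1 ⟨0, hΦ₀⟩)
  refine tendsto_order.2 ⟨fun b hb => ?_, fun b hb => ?_⟩
  · filter_upwards [eventually_ge_atTop 0] with c hc
    exact hb.trans_le (le_sSup_image_sub_mul hu hΦ hΦ₀ hua hc)
  · obtain ⟨m, ham, hmb⟩ := exists_between hb
    filter_upwards [eventually_sSup_image_sub_mul_le hS hu hΦ hua ham] with c hc
    exact hc.trans_lt hmb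

end SupPenalization

lemma tendsto_comap_of_abs_sub_le_modulus {X : Type*} {u D : X → ℝ} {a : ℝ} {ρ : ℝ → ℝ}
    (hmono : Monotone ρ) (hρ : Tendsto ρ (𝓝[>] 0) (𝓝 0)) (h : ∀ x, |u x - a| ≤ ρ (D x)) :
    Tendsto u (comap D (𝓝 0)) (𝓝 a) := by
  refine Metric.tendsto_nhds.2 fun ε hε => ?_
  obtain ⟨δ, hρδ, hδ : 0 < δ⟩ :=
    ((hρ.eventually (gt_mem_nhds hε)).and self_mem_nhdsWithin).exists
  filter_upwards [tendsto_comap.eventually (gt_mem_nhds hδ)] with x hx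
  exact (h x).trans_lt ((hmono hx.le).trans_lt hρδ)

section PathNorm

variable {T p q : ℝ} {d : ℕ} {f : ℝ → E d}

/-- The measure `δ_T + ds` on `[0, T]`, whose `L^q` norms are the path norms `pnorm T q`. -/
def pathMeasure (T : ℝ) : Measure ℝ := Measure.dirac T + volume.restrict (Ioc 0 T)

instance : IsFiniteMeasure (pathMeasure T) := by
  unfold pathMeasure
  infer_instance

lemma pathMeasure_real_univ (hT : 0 ≤ T) : (pathMeasure T).real univ = 1 + T := by
  simp [pathMeasure, measureReal_add_apply, hT]

lemma ae_pathMeasure_mem_Icc (hT : 0 ≤ T) : ∀ᵐ s ∂pathMeasure T, s ∈ Icc 0 T := by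
  refine ae_add_measure_iff.2 ⟨?_, ?_⟩
  · exact (ae_dirac_iff measurableSet_Icc).2 ⟨hT, le_rfl⟩
  · filter_upwards [ae_restrict_mem measurableSet_Ioc] with s hs
    exact Ioc_subset_Icc_self hs

lemma memLp_pathMeasure (hT : 0 ≤ T) (hf : ContinuousOn f (Icc 0 T)) (r : ENNReal) :
    MemLp f r (pathMeasure T) := by
  have hmeas : AEStronglyMeasurable f (pathMeasure T) := by
    rw [← Measure.restrict_eq_self_of_ae_mem (ae_pathMeasure_mem_Icc hT)]
    exact hf.aestronglyMeasurable measurableSet_Icc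
  obtain ⟨C, hC⟩ := isCompact_Icc.exists_bound_of_continuousOn hf
  exact MemLp.of_bound hmeas C ((ae_pathMeasure_mem_Icc hT).mono hC)

lemma pnormPow_eq_integral (hT : 0 ≤ T) (hq : 0 ≤ q) (hf : ContinuousOn f (Icc 0 T)) :
    pnormPow T q f = ∫ s, ‖f s‖ ^ q ∂pathMeasure T := by
  have hint : Integrable (fun s => ‖f s‖ ^ q) (pathMeasure T) := by
    simpa [ENNReal.toReal_ofReal hq] using
      (memLp_pathMeasure hT hf (ENNReal.ofReal q)).integrable_norm_rpow'
  rw [pathMeasure, integral_add_measure hint.left_of_add_measure hint.right_of_add_measure,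
    integral_dirac, ← intervalIntegral.integral_of_le hT, pnormPow]

lemma ofReal_pnorm_eq_eLpNorm (hT : 0 ≤ T) (hq : 0 < q) (hf : ContinuousOn f (Icc 0 T)) :
    ENNReal.ofReal (pnorm T q f) = eLpNorm f (ENNReal.ofReal q) (pathMeasure T) := by
  rw [(memLp_pathMeasure hT hf _).eLpNorm_eq_integral_rpow_norm (by simpa using hq)
    ENNReal.ofReal_ne_top, ENNReal.toReal_ofReal hq.le, ← pnormPow_eq_integral hT hq.le hf, pnorm,
    one_div]

lemma pnormPow_nonneg (hT : 0 ≤ T) : 0 ≤ pnormPow T q f :=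
  add_nonneg (by positivity)
    (intervalIntegral.integral_nonneg hT fun s _ => Real.rpow_nonneg (norm_nonneg (f s)) q)

lemma pnorm_nonneg (hT : 0 ≤ T) : 0 ≤ pnorm T q f :=
  Real.rpow_nonneg (pnormPow_nonneg hT) _

lemma pnormPow_zero (hq : q ≠ 0) : pnormPow T q (0 : ℝ → E d) = 0 := by
  simp [pnormPow, Real.zero_rpow hq]

lemma pnorm_le_pnorm_mul (hT : 0 ≤ T) (hp : 0 < p) (hpq : p ≤ q)
    (hf : ContinuousOn f (Icc 0 T)) :
    pnorm T p f ≤ pnorm T q f * (1 + T) ^ (1 / p - 1 / q) := by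
  have hq : 0 < q := hp.trans_le hpq
  have hexp : 0 ≤ 1 / p - 1 / q := sub_nonneg.2 (one_div_le_one_div_of_le hp hpq)
  have hmass : pathMeasure T univ = ENNReal.ofReal (1 + T) := by
    rw [← pathMeasure_real_univ hT, ofReal_measureReal]
  have h := eLpNorm_le_eLpNorm_mul_rpow_measure_univ (ENNReal.ofReal_le_ofReal hpq)
    (memLp_pathMeasure hT hf 0).aestronglyMeasurable
  rw [← ofReal_pnorm_eq_eLpNorm hT hp hf, ← ofReal_pnorm_eq_eLpNorm hT hq hf, hmass,
    ENNReal.toReal_ofReal hp.le, ENNReal.toReal_ofReal hq.le,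
    ENNReal.ofReal_rpow_of_nonneg (by positivity) hexp,
    ← ENNReal.ofReal_mul (pnorm_nonneg hT)] at h
  exact (ENNReal.ofReal_le_ofReal_iff
    (mul_nonneg (pnorm_nonneg hT) (by positivity))).1 h

end PathNorm

namespace Theta

variable {T p : ℝ} {d : ℕ}

/-- The path of `θ = (t, ω)` stopped at time `t`, that is `ω_{t∧·}`. -/
def stopped (θ : Theta T d) : ℝ → E d := fun r => θ.path (min θ.t r)

/-- The point `(t, 0)` of `Θ`; the origin of `Θ` is the case `t = 0`. -/
def zeroPath (d : ℕ) (t : Icc 0 T) : Theta T d := ⟨t, 0, t.2, continuousOn_const, rfl⟩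

/-- The penalization `Φ(0, 0, θ, ℓ^{t,0})` of `θ = (t, ω)` at the origin, with `‖ℓ^{t,0} - I‖_∞`
evaluated to `t`. -/
def originPenalty (p : ℝ) (θ : Theta T d) : ℝ :=
  θ.t ^ (2 / (3 * p + 3)) + pnormPow T (p + 1) θ.stopped

lemma horizon_nonneg (θ : Theta T d) : 0 ≤ T := θ.ht.1.trans θ.ht.2

lemma continuousOn_stopped (θ : Theta T d) : ContinuousOn θ.stopped (Icc 0 T) :=
  θ.cont.comp (by fun_prop) fun _ hs => ⟨le_min θ.ht.1 hs.1, min_le_of_right_le hs.2⟩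

lemma originPenalty_nonneg (θ : Theta T d) : 0 ≤ θ.originPenalty p :=
  add_nonneg (Real.rpow_nonneg θ.ht.1 _) (pnormPow_nonneg θ.horizon_nonneg)

lemma originPenalty_zeroPath (hp : 0 < p) (t : Icc 0 T) :
    (zeroPath d t).originPenalty p = (t : ℝ) ^ (2 / (3 * p + 3)) := by
  have hstopped : (zeroPath d t).stopped = 0 := rfl
  rw [originPenalty, hstopped, pnormPow_zero (by positivity), add_zero, zeroPath]

lemma t_le_originPenalty_rpow (hp : 0 < p) (θ : Theta T d) :
    θ.t ≤ θ.originPenalty p ^ ((3 * p + 3) / 2) := by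
  have hle : θ.t ^ (2 / (3 * p + 3)) ≤ θ.originPenalty p :=
    le_add_of_nonneg_right (pnormPow_nonneg θ.horizon_nonneg)
  rwa [← inv_div, Real.le_rpow_inv_iff_of_pos θ.ht.1 θ.originPenalty_nonneg (by positivity)]

lemma pnorm_stopped_le_originPenalty_rpow (hp : 0 < p) (θ : Theta T d) :
    pnorm T (p + 1) θ.stopped ≤ θ.originPenalty p ^ (1 / (p + 1)) :=
  Real.rpow_le_rpow (pnormPow_nonneg θ.horizon_nonneg)
    (le_add_of_nonneg_left (Real.rpow_nonneg θ.ht.1 _)) (by positivity)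

lemma dpDist_origin (h0 : (0 : ℝ) ∈ Icc 0 T) (θ : Theta T d) :
    dpDist T p θ (zeroPath d ⟨0, h0⟩) = θ.t + pnorm T p θ.stopped := by
  unfold stopped
  simp [dpDist, zeroPath, abs_of_nonneg θ.ht.1]

lemma dpDist_origin_le (hp : 0 < p) (h0 : (0 : ℝ) ∈ Icc 0 T) (θ : Theta T d) :
    dpDist T p θ (zeroPath d ⟨0, h0⟩) ≤ θ.originPenalty p ^ ((3 * p + 3) / 2) +
      θ.originPenalty p ^ (1 / (p + 1)) * (1 + T) ^ (1 / p - 1 / (p + 1)) := by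
  have hT : 0 ≤ T := θ.horizon_nonneg
  rw [dpDist_origin]
  gcongr
  · exact θ.t_le_originPenalty_rpow hp
  · calc pnorm T p θ.stopped
        ≤ pnorm T (p + 1) θ.stopped * (1 + T) ^ (1 / p - 1 / (p + 1)) :=
          pnorm_le_pnorm_mul hT hp (by linarith) θ.continuousOn_stopped
      _ ≤ _ := by gcongr; exact θ.pnorm_stopped_le_originPenalty_rpow hp

lemma tendsto_dpDist_origin (hp : 0 < p) (h0 : (0 : ℝ) ∈ Icc 0 T) :
    Tendsto (fun θ : Theta T d => dpDist T p θ (zeroPath d ⟨0, h0⟩))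
      (comap (originPenalty p) (𝓝 0)) (𝓝 0) := by
  have hrpow {e : ℝ} (he : 0 < e) :
      Tendsto (fun θ : Theta T d => θ.originPenalty p ^ e) (comap (originPenalty p) (𝓝 0))
        (𝓝 0) := by
    simpa [Real.zero_rpow he.ne'] using
      (tendsto_comap (f := originPenalty p) (x := 𝓝 0)).rpow_const (Or.inr he.le)
  have hbound : Tendsto (fun θ : Theta T d => θ.originPenalty p ^ ((3 * p + 3) / 2) +
      θ.originPenalty p ^ (1 / (p + 1)) * (1 + T) ^ (1 / p - 1 / (p + 1)))
      (comap (originPenalty p) (𝓝 0)) (𝓝 0) := by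
    simpa using (hrpow (by positivity)).add ((hrpow (by positivity)).mul_const _)
  refine squeeze_zero (fun θ => ?_) (dpDist_origin_le hp h0) hbound
  exact add_nonneg (abs_nonneg _) (pnorm_nonneg θ.horizon_nonneg)

lemma zero_mem_closure_originPenalty_image (hT : 0 < T) (hp : 0 < p) :
    0 ∈ closure (originPenalty p '' {θ : Theta T d | (θ.t, θ.path) ≠ (0, 0)}) := by
  have hlim : Tendsto (fun t : ℝ => t ^ (2 / (3 * p + 3))) (𝓝[>] 0) (𝓝 0) := by
    have he : 0 < 2 / (3 * p + 3) := by positivity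
    simpa [Real.zero_rpow he.ne'] using
      (Real.continuousAt_rpow_const 0 _ (Or.inr he.le)).tendsto.mono_left nhdsWithin_le_nhds
  refine mem_closure_of_tendsto hlim ?_
  filter_upwards [Ioo_mem_nhdsGT hT] with t ht
  refine ⟨zeroPath d ⟨t, Ioo_subset_Icc_self ht⟩, fun h => ?_, originPenalty_zeroPath hp _⟩
  exact ht.1.ne' (congrArg Prod.fst h)

end Theta

section Regularization

variable {T p : ℝ} {d : ℕ} {u : Theta T d → ℝ}

lemma supId_collapse {t : ℝ} (ht : t ∈ Icc 0 T) :
    supId T (fun r => if r ≤ t then 0 else r - t) = t := by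
  have hdev (r : Icc 0 T) : |(if (r : ℝ) ≤ t then 0 else (r : ℝ) - t) - r| = min (r : ℝ) t := by
    split_ifs with hrt
    · simp [abs_of_nonneg r.2.1, hrt]
    · simp [abs_of_nonneg ht.1, (not_le.1 hrt).le]
  have hmax : IsGreatest (range fun r : Icc 0 T => min (r : ℝ) t) t :=
    ⟨⟨⟨t, ht⟩, min_self t⟩, forall_mem_range.2 fun r => min_le_right _ _⟩
  simp_rw [supId, hdev]
  exact hmax.csSup_eq

lemma Phi_origin (θ : Theta T d) :
    Phi T p 0 (0 : ℝ → E d) θ (fun r => if r ≤ θ.t then 0 else r - θ.t) = θ.originPenalty p := by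
  rw [Phi, supId_collapse θ.ht]
  simp [Theta.originPenalty, Theta.stopped, pnormPow]

lemma reg_origin (n : ℕ) :
    reg T p u n 0 (0 : ℝ → E d) = sSup ((fun θ => u θ - n * θ.originPenalty p) ''
      {θ : Theta T d | (θ.t, θ.path) ≠ (0, 0)}) := by
  simp only [reg, LL, if_true, mem_singleton_iff, image, mem_ofPred_eq]
  congr! 5 with x θ
  simp [Phi_origin, eq_comm]

theorem stmt4_general (hT : 0 < T) (hp : 0 < p) (hub : BddAbove (range u))
    (hu : Tendsto u (comap (fun θ => dpDist T p θ (.zeroPath d ⟨0, le_rfl, hT.le⟩)) (𝓝 0))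
      (𝓝 (u (.zeroPath d ⟨0, le_rfl, hT.le⟩)))) :
    Tendsto (fun n : ℕ => reg T p u n 0 (0 : ℝ → E d)) atTop
      (𝓝 (u (.zeroPath d ⟨0, le_rfl, hT.le⟩))) := by
  have hu_penalty : Tendsto u (comap (Theta.originPenalty p) (𝓝 0))
      (𝓝 (u (.zeroPath d ⟨0, le_rfl, hT.le⟩))) :=
    hu.comp (tendsto_comap_iff.2 (Theta.tendsto_dpDist_origin hp ⟨le_rfl, hT.le⟩))
  simp_rw [reg_origin]
  exact (tendsto_sSup_image_sub_mul (hub.mono (image_subset_range _ _))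
    (fun θ _ => θ.originPenalty_nonneg) (Theta.zero_mem_closure_originPenalty_image hT hp)
    hu_penalty).comp tendsto_natCast_atTop_atTop

end Regularization

/-- (Lemma 5.5) If `u` is bounded and `d_p`-uniformly continuous (with modulus `ρ`),
then `u^n(𝟎) → u(𝟎)` as `n → ∞`, where `𝟎 = (0, 0)` is the point of `Θ` with `t = 0`
and `ω` the constant zero path. -/
theorem stmt4 (T : ℝ) (hT : 0 < T) (d : ℕ) (hd : 1 ≤ d) (p : ℝ) (hp : 1 ≤ p)
    (u : Theta T d → ℝ) (hub : ∃ M : ℝ, ∀ θ : Theta T d, |u θ| ≤ M)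
    (ρ : ℝ → ℝ) (hmono : Monotone ρ)
    (hρ0 : Filter.Tendsto ρ (nhdsWithin 0 (Set.Ioi 0)) (𝓝 0))
    (huc : ∀ θ θ' : Theta T d, |u θ - u θ'| ≤ ρ (dpDist T p θ θ')) :
    Filter.Tendsto (fun n : ℕ => reg T p u n 0 (0 : ℝ → E d)) Filter.atTop
      (𝓝 (u ⟨0, 0, ⟨le_rfl, hT.le⟩, continuousOn_const, rfl⟩)) := by
  obtain ⟨M, hM⟩ := hub
  exact stmt4_general hT (by linarith) ⟨M, forall_mem_range.2 fun θ => (le_abs_self _).trans (hM θ)⟩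
    (tendsto_comap_of_abs_sub_le_modulus hmono hρ0 fun θ => huc θ _)
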